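/- Let A be a finite set of nonzero rational numbers with -1 ∉ A, let K be a positive integer, and suppose that |AA| ≤ K|A|. Then for every integer k ≥ 2, the k-fold product set of the shift A+1 satisfies |(A+1)^{(k)}| ≥ |A|^k / (8k^4)^{kK}. -/

import Mathlib

open Finset Pointwise

/-- The `k`-fold product set of a finite set `B` of rationals:
`B^(k) = {b₁ ⋯ b_k : bᵢ ∈ B}`. -/
def kfoldProd (k : ℕ) (B : Finset ℚ) : Finset ℚ :=
  (Fintype.piFinset fun _ : Fin k => B).image fun f => ∏ i, f i

/-- The solutions of `∏ (x i + 1) = ∏ (y i + 1)` with `k` factors on each side, where the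
variable at position `i` ranges over `X i`. -/
def shiftSolutions (k : ℕ) (X : Fin k ⊕ Fin k → Finset ℚ) : Finset (Fin k ⊕ Fin k → ℚ) :=
  {x ∈ Fintype.piFinset X | ∏ i, (x (.inl i) + 1) = ∏ i, (x (.inr i) + 1)}

/-- The `k`-fold multiplicative energy of the shift `X + 1`. -/
def shiftEnergy (k : ℕ) (X : Finset ℚ) : ℕ := (shiftSolutions k fun _ => X).card

lemma exists_int_common_multiple (A : Finset ℚ) :
    ∃ (D : ℚ) (n : ℚ → ℤ), D ≠ 0 ∧ ∀ a ∈ A, (n a : ℚ) = D * (a + 1) := by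
  refine ⟨((∏ a ∈ A, (a + 1).den : ℕ) : ℚ),
    fun a => (((∏ a ∈ A, (a + 1).den : ℕ) : ℚ) * (a + 1)).num, ?_, fun a ha => ?_⟩
  · exact Nat.cast_ne_zero.2 (Finset.prod_ne_zero_iff.2 fun a _ => Rat.den_nz _)
  · obtain ⟨c, hc⟩ := Finset.dvd_prod_of_mem (fun a : ℚ => (a + 1).den) ha
    have h : ((∏ a ∈ A, (a + 1).den : ℕ) : ℚ) * (a + 1) = ((c * (a + 1).num : ℤ) : ℚ) := by
      rw [hc]
      push_cast
      rw [mul_comm ((a + 1).den : ℚ), mul_assoc, Rat.den_mul_eq_num]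
    simp only [h, Rat.num_intCast]

/-- Finitely many characters detect the multiplicative relations among the elements of `A + 1`
with `k` factors on each side. -/
lemma exists_detecting_characters (k : ℕ) (A : Finset ℚ) (hA1 : (-1 : ℚ) ∉ A) :
    ∃ (Ω : Type) (_ : Fintype Ω) (_ : Nonempty Ω) (u : Ω → ℚ → ℂ),
      ∀ x : Fin k ⊕ Fin k → ℚ, (∀ i, x i ∈ A) →
        ∑ ω, (∏ i, u ω (x (.inl i))) * ∏ i, star (u ω (x (.inr i))) =
          if ∏ i, (x (.inl i) + 1) = ∏ i, (x (.inr i) + 1) then (Fintype.card Ω : ℂ) else 0 := by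
  classical
  obtain ⟨D, n, hD, hn⟩ := exists_int_common_multiple A
  have hn0 : ∀ a ∈ A, n a ≠ 0 := by
    intro a ha h
    have h1 := hn a ha
    rw [h, Int.cast_zero, eq_comm, mul_eq_zero] at h1
    refine hA1 ?_
    rcases h1 with h1 | h1
    · exact absurd h1 hD
    · rwa [← eq_neg_of_add_eq_zero_left h1]
  have hrel : ∀ x : Fin k ⊕ Fin k → ℚ, (∀ i, x i ∈ A) →
      (∏ i, (x (.inl i) + 1) = ∏ i, (x (.inr i) + 1) ↔
        ∏ i, n (x (.inl i)) = ∏ i, n (x (.inr i))) := by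
    intro x hx
    rw [← Int.cast_inj (α := ℚ)]
    push_cast
    simp only [hn _ (hx _), Finset.prod_mul_distrib]
    rw [mul_right_inj' (by simp [hD])]
  let T : Finset (Fin k ⊕ Fin k → ℚ) := {x ∈ Fintype.piFinset fun _ => A |
    ∏ i, n (x (.inl i)) ≠ ∏ i, n (x (.inr i))}
  let W : ℤ := (∏ a ∈ A, n a) * ∏ x ∈ T, (∏ i, n (x (.inl i)) - ∏ i, n (x (.inr i)))
  have hW : W ≠ 0 := by
    refine mul_ne_zero (Finset.prod_ne_zero_iff.2 hn0) (Finset.prod_ne_zero_iff.2 ?_)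
    intro x hx
    exact sub_ne_zero.2 (Finset.mem_filter.1 hx).2
  obtain ⟨l, hl, hlp⟩ := Nat.exists_infinite_primes (W.natAbs + 1)
  have : Fact l.Prime := ⟨hlp⟩
  have hlW : ((W : ℤ) : ZMod l) ≠ 0 := by
    rw [Ne, ZMod.intCast_zmod_eq_zero_iff_dvd]
    intro h
    have := Nat.le_of_dvd (Int.natAbs_pos.2 hW) (Int.natCast_dvd.1 h)
    omega
  have hlA : ∀ a ∈ A, ((n a : ℤ) : ZMod l) ≠ 0 := by
    intro a ha h
    refine hlW ?_
    simp only [W, Int.cast_mul, Int.cast_prod]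
    rw [Finset.prod_eq_zero ha h, zero_mul]
  have hlT : ∀ x ∈ T, ∏ i, ((n (x (.inl i)) : ℤ) : ZMod l) ≠
      ∏ i, ((n (x (.inr i)) : ℤ) : ZMod l) := by
    intro x hx h
    refine hlW ?_
    simp only [W, Int.cast_mul, Int.cast_prod]
    rw [Finset.prod_eq_zero hx, mul_zero]
    push_cast
    exact sub_eq_zero.2 h
  refine ⟨DirichletCharacter ℂ l, Fintype.ofFinite _, ⟨1⟩, fun χ a => χ (n a : ZMod l), ?_⟩
  intro x hx
  have hcard : (Fintype.card (DirichletCharacter ℂ l) : ℂ) = (l.totient : ℂ) := by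
    rw [← DirichletCharacter.card_eq_totient_of_hasEnoughRootsOfUnity ℂ l,
      Nat.card_eq_fintype_card]
  have hiff : (∏ i, (x (.inl i) + 1) = ∏ i, (x (.inr i) + 1)) ↔
      ∏ i, ((n (x (.inr i)) : ℤ) : ZMod l) = ∏ i, ((n (x (.inl i)) : ℤ) : ZMod l) := by
    rw [hrel x hx]
    constructor
    · intro h
      have := congrArg (Int.cast : ℤ → ZMod l) h
      push_cast at this
      exact this.symm
    · intro h
      by_contra hne
      exact hlT x (Finset.mem_filter.2 ⟨Fintype.mem_piFinset.2 hx, hne⟩) h.symm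
  have hunit : IsUnit (∏ i, ((n (x (.inr i)) : ℤ) : ZMod l)) :=
    (Finset.prod_ne_zero_iff.2 fun i _ => hlA _ (hx _)).isUnit
  have key := DirichletCharacter.sum_char_inv_mul_char_eq ℂ hunit
    (∏ i, ((n (x (.inl i)) : ℤ) : ZMod l))
  simp only [hiff]
  rw [show (Fintype.card (DirichletCharacter ℂ l) : ℂ) = _ from hcard]
  refine Eq.trans (Finset.sum_congr (by congr!) fun χ _ => ?_) key
  rw [← star_prod, ← map_prod, ← map_prod, ← MulChar.inv_apply' χ, mul_comm]
  congr 1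
  exact MulChar.star_apply' χ _

lemma card_mul_card_shiftSolutions {k : ℕ} {A : Finset ℚ} {Ω : Type} [Fintype Ω]
    {u : Ω → ℚ → ℂ}
    (hu : ∀ x : Fin k ⊕ Fin k → ℚ, (∀ i, x i ∈ A) →
        ∑ ω, (∏ i, u ω (x (.inl i))) * ∏ i, star (u ω (x (.inr i))) =
          if ∏ i, (x (.inl i) + 1) = ∏ i, (x (.inr i) + 1) then (Fintype.card Ω : ℂ) else 0)
    {X : Fin k ⊕ Fin k → Finset ℚ} (hX : ∀ i, X i ⊆ A) :
    (Fintype.card Ω * (shiftSolutions k X).card : ℂ) =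
      ∑ ω, (∏ i, ∑ x ∈ X (.inl i), u ω x) * ∏ i, star (∑ x ∈ X (.inr i), u ω x) := by
  classical
  let w : Ω → Fin k ⊕ Fin k → ℚ → ℂ := fun ω i x =>
    Sum.elim (fun _ => u ω x) (fun _ => star (u ω x)) i
  have h : ∀ ω, (∏ i, ∑ x ∈ X (.inl i), u ω x) * ∏ i, star (∑ x ∈ X (.inr i), u ω x) =
      ∑ x ∈ Fintype.piFinset X, (∏ i, u ω (x (.inl i))) * ∏ i, star (u ω (x (.inr i))) := by
    intro ω
    have := Finset.prod_univ_sum X (w ω)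
    simpa only [Fintype.prod_sum_type, w, Sum.elim_inl, Sum.elim_inr, star_sum] using this
  simp only [h]
  rw [Finset.sum_comm, Finset.sum_congr rfl fun x hx =>
    hu x fun i => hX i (Fintype.mem_piFinset.1 hx i), ← Finset.sum_filter, Finset.sum_const,
    nsmul_eq_mul, mul_comm, shiftSolutions]

/-- Real-valued form of the detecting characters: the functions `S X ω` are the moduli of the
exponential sums over `X`. -/
lemma exists_moments (k : ℕ) (A : Finset ℚ) (hA1 : (-1 : ℚ) ∉ A) :
    ∃ (Ω : Type) (_ : Fintype Ω) (_ : Nonempty Ω) (S : Finset ℚ → Ω → ℝ),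
      (∀ X ω, 0 ≤ S X ω) ∧
      (∀ (τ : Type) [Fintype τ] [DecidableEq τ] (φ : ℚ → τ) (X : Finset ℚ) (ω : Ω),
        S X ω ≤ ∑ t, S {x ∈ X | φ x = t} ω) ∧
      (∀ X ⊆ A, (Fintype.card Ω : ℝ) * shiftEnergy k X = ∑ ω, (S X ω ^ 2) ^ k) ∧
      ∀ X : Fin k ⊕ Fin k → Finset ℚ, (∀ i, X i ⊆ A) →
        (Fintype.card Ω : ℝ) * (shiftSolutions k X).card ≤ ∑ ω, ∏ i, S (X i) ω := by
  obtain ⟨Ω, hΩ, hne, u, hu⟩ := exists_detecting_characters k A hA1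
  refine ⟨Ω, hΩ, hne, fun X ω => ‖∑ x ∈ X, u ω x‖, fun X ω => norm_nonneg _, ?_, ?_, ?_⟩
  · intro τ _ _ φ X ω
    simp only
    rw [← Finset.sum_fiberwise X φ]
    exact norm_sum_le _ _
  · intro X hX
    have h := card_mul_card_shiftSolutions hu (X := fun _ => X) fun _ => hX
    have h2 : ∀ ω, (∏ _i : Fin k, ∑ x ∈ X, u ω x) * ∏ _i : Fin k, star (∑ x ∈ X, u ω x) =
        (((‖∑ x ∈ X, u ω x‖ ^ 2) ^ k : ℝ) : ℂ) := by
      intro ω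
      rw [Finset.prod_const, Finset.prod_const, Finset.card_univ, Fintype.card_fin, ← mul_pow]
      rw [Complex.star_def, Complex.mul_conj, Complex.normSq_eq_norm_sq]
      push_cast
      rfl
    simp only [h2] at h
    exact_mod_cast h
  · intro X hX
    have h := congrArg norm (card_mul_card_shiftSolutions hu hX)
    have h1 : ‖(Fintype.card Ω * (shiftSolutions k X).card : ℂ)‖ =
        (Fintype.card Ω : ℝ) * (shiftSolutions k X).card := by
      rw [norm_mul, Complex.norm_natCast, Complex.norm_natCast]
    rw [← h1, h]
    refine (norm_sum_le _ _).trans (Finset.sum_le_sum fun ω _ => ?_)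
    rw [norm_mul, norm_prod, norm_prod, Fintype.prod_sum_type]
    simp only [norm_star]
    exact le_rfl

lemma mul_pow_pred_le {x y : ℝ} (hx : 0 ≤ x) (hy : 0 ≤ y) (n : ℕ) :
    (n + 1) * (x * y ^ n) ≤ x ^ (n + 1) + n * y ^ (n + 1) := by
  induction n with
  | zero => simp
  | succ n ih =>
    have h1 : 0 ≤ (x - y) * (x ^ (n + 1) - y ^ (n + 1)) := by
      rcases le_total x y with h | h
      · exact mul_nonneg_of_nonpos_of_nonpos (sub_nonpos.2 h)
          (sub_nonpos.2 (pow_le_pow_left₀ hx h _))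
      · exact mul_nonneg (sub_nonneg.2 h) (sub_nonneg.2 (pow_le_pow_left₀ hy h _))
    have h2 := mul_le_mul_of_nonneg_left ih hy
    push_cast
    simp only [pow_succ] at *
    nlinarith

/-- Hölder's inequality for the exponents `n + 1` and `(n + 1) / n`. -/
lemma sum_mul_pow_le {Ω : Type*} [Fintype Ω] (F G : Ω → ℝ) (hF : ∀ ω, 0 ≤ F ω)
    (hG : ∀ ω, 0 ≤ G ω) (n : ℕ) {N R m : ℝ} (hR : 0 < R) (hm : 0 < m)
    (hFR : ∑ ω, F ω ^ (n + 1) ≤ N * R ^ (n + 1)) (hGm : ∑ ω, G ω ^ (n + 1) ≤ N * m ^ (n + 1)) :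
    ∑ ω, G ω * F ω ^ n ≤ N * (m * R ^ n) := by
  have hn : (0 : ℝ) < n + 1 := by positivity
  have h : ∑ ω, (n + 1) * ((G ω / m) * (F ω / R) ^ n) ≤
      ∑ ω, ((G ω / m) ^ (n + 1) + n * (F ω / R) ^ (n + 1)) :=
    Finset.sum_le_sum fun ω _ =>
      mul_pow_pred_le (div_nonneg (hG ω) hm.le) (div_nonneg (hF ω) hR.le) n
  rw [Finset.sum_add_distrib, ← Finset.mul_sum, ← Finset.mul_sum] at h
  simp only [div_pow] at h
  rw [← Finset.sum_div, ← Finset.sum_div] at h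
  have h1 : (∑ ω, G ω ^ (n + 1)) / m ^ (n + 1) ≤ N := by rwa [div_le_iff₀ (by positivity)]
  have h2 : (∑ ω, F ω ^ (n + 1)) / R ^ (n + 1) ≤ N := by rwa [div_le_iff₀ (by positivity)]
  have h3 : ∑ ω, G ω / m * (F ω ^ n / R ^ n) = (∑ ω, G ω * F ω ^ n) / (m * R ^ n) := by
    rw [Finset.sum_div]
    exact Finset.sum_congr rfl fun ω _ => by rw [div_mul_div_comm]
  rw [h3] at h
  rw [← div_le_iff₀ (by positivity)]
  have h4 : (n : ℝ) * ((∑ ω, F ω ^ (n + 1)) / R ^ (n + 1)) ≤ n * N :=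
    mul_le_mul_of_nonneg_left h2 (by positivity)
  refine le_of_mul_le_mul_left (h.trans ?_) hn
  linarith

lemma shiftEnergy_le_of_split {k : ℕ} (hk : 0 < k) {X : Finset ℚ} (hX1 : (-1 : ℚ) ∉ X) {M : ℝ}
    (hM : 0 ≤ M) {τ : Type} [Fintype τ] [DecidableEq τ] (φ : ℚ → τ)
    (h : ∀ t, (shiftEnergy k {x ∈ X | φ x = t} : ℝ) ≤
      (M * ({x ∈ X | φ x = t} : Finset ℚ).card) ^ k) :
    (shiftEnergy k X : ℝ) ≤ ((Fintype.card τ : ℝ) ^ 2 * M * X.card) ^ k := by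
  obtain ⟨Ω, _, _, S, hS0, hSτ, hSE, -⟩ := exists_moments k X hX1
  set c : ℝ := (Fintype.card τ : ℝ)
  have hN : (0 : ℝ) < Fintype.card Ω := by exact_mod_cast Fintype.card_pos
  obtain ⟨r, hr⟩ : ∃ r, 2 * k = r + 1 := ⟨2 * k - 1, by omega⟩
  have hpt : ∀ ω, (S X ω ^ 2) ^ k ≤ c ^ r * ∑ t, (S {x ∈ X | φ x = t} ω ^ 2) ^ k := by
    intro ω
    simp only [← pow_mul, hr]
    exact (pow_le_pow_left₀ (hS0 _ _) (hSτ τ φ X ω) _).trans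
      (pow_sum_le_card_mul_sum_pow (fun t _ => hS0 _ ω) r)
  have hc1 : 1 ≤ c := by
    have : Nonempty τ := ⟨φ 0⟩
    exact Nat.one_le_cast.2 Fintype.card_pos
  have hE : (shiftEnergy k X : ℝ) ≤ c ^ r * ∑ t, (shiftEnergy k {x ∈ X | φ x = t} : ℝ) := by
    refine le_of_mul_le_mul_left ?_ hN
    rw [hSE X subset_rfl, mul_left_comm, Finset.mul_sum]
    simp only [hSE _ (Finset.filter_subset _ X)]
    rw [Finset.sum_comm, Finset.mul_sum]
    exact Finset.sum_le_sum fun ω _ => hpt ω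
  refine hE.trans ?_
  have hsum : ∑ t, (shiftEnergy k {x ∈ X | φ x = t} : ℝ) ≤ ∑ _t : τ, (M * X.card) ^ k := by
    refine Finset.sum_le_sum fun t _ => (h t).trans ?_
    gcongr
    exact Finset.filter_subset _ _
  rw [Finset.sum_const, Finset.card_univ, nsmul_eq_mul] at hsum
  calc c ^ r * ∑ t, (shiftEnergy k {x ∈ X | φ x = t} : ℝ)
      ≤ c ^ r * (c * (M * X.card) ^ k) := by gcongr
    _ = (c ^ 2 * M * X.card) ^ k := by
      rw [← mul_assoc, ← pow_succ, ← hr, pow_mul, ← mul_pow, mul_assoc]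

lemma shiftEnergy_le_sum_card_of_repeat {k : ℕ} {X : Finset ℚ} (φ : ℚ → ℤ)
    (hφ : ∀ x ∈ shiftSolutions k fun _ => X, ∃ i j, i ≠ j ∧ φ (x i) = φ (x j)) :
    shiftEnergy k X ≤ ∑ q ∈ (Finset.univ : Finset (Fin k ⊕ Fin k)).offDiag, ∑ t ∈ X.image φ,
      (shiftSolutions k fun i => if i ∈ ({q.1, q.2} : Finset _) then {x ∈ X | φ x = t}
        else X).card := by
  have hsub : (shiftSolutions k fun _ => X) ⊆
      (Finset.univ : Finset (Fin k ⊕ Fin k)).offDiag.biUnion fun q => (X.image φ).biUnion fun t =>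
        shiftSolutions k fun i => if i ∈ ({q.1, q.2} : Finset _) then {x ∈ X | φ x = t}
          else X := by
    intro x hx
    obtain ⟨i, j, hij, he⟩ := hφ x hx
    obtain ⟨hxX, hxe⟩ := Finset.mem_filter.1 hx
    rw [Fintype.mem_piFinset] at hxX
    refine Finset.mem_biUnion.2 ⟨(i, j), by simpa using hij, Finset.mem_biUnion.2
      ⟨φ (x i), Finset.mem_image_of_mem _ (hxX i), Finset.mem_filter.2
        ⟨Fintype.mem_piFinset.2 fun l => ?_, hxe⟩⟩⟩
    split_ifs with hl
    · refine Finset.mem_filter.2 ⟨hxX l, ?_⟩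
      rcases Finset.mem_insert.1 hl with rfl | hl
      · rfl
      · rw [Finset.mem_singleton.1 hl, he]
    · exact hxX l
  exact (Finset.card_le_card hsub).trans (Finset.card_biUnion_le.trans
    (Finset.sum_le_sum fun q _ => Finset.card_biUnion_le))

/-- If in every solution two of the variables share the same value of `φ`, the energy is controlled
by the energies of the fibres of `φ`. -/
lemma shiftEnergy_le_of_repeat {k : ℕ} (hk : 0 < k) {X : Finset ℚ} (hX1 : (-1 : ℚ) ∉ X) {M : ℝ}
    (hM : 0 < M) (φ : ℚ → ℤ)
    (hφ : ∀ x ∈ shiftSolutions k fun _ => X, ∃ i j, i ≠ j ∧ φ (x i) = φ (x j))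
    (h : ∀ t, (shiftEnergy k {x ∈ X | φ x = t} : ℝ) ≤
      (M * ({x ∈ X | φ x = t} : Finset ℚ).card) ^ k) :
    (shiftEnergy k X : ℝ) ≤ (2 * k * (2 * k - 1) * M * X.card) ^ k := by
  obtain ⟨Ω, _, _, S, hS0, -, hSE, hSS⟩ := exists_moments k X hX1
  have hN : (0 : ℝ) < Fintype.card Ω := by exact_mod_cast Fintype.card_pos
  have hk1 : (1 : ℝ) ≤ k := by exact_mod_cast hk
  obtain ⟨n, rfl⟩ : ∃ n, k = n + 1 := ⟨k - 1, by omega⟩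
  rcases (Nat.zero_le (shiftEnergy (n + 1) X)).eq_or_lt with he | he
  · rw [← he, Nat.cast_zero]
    refine pow_nonneg (mul_nonneg (mul_nonneg (mul_nonneg (by positivity) ?_) hM.le)
      (Nat.cast_nonneg _)) _
    linarith
  set e : ℝ := (shiftEnergy (n + 1) X : ℝ)
  have he0 : 0 < e := Nat.cast_pos.2 he
  obtain ⟨R, hR, hRe⟩ : ∃ R : ℝ, 0 < R ∧ R ^ (n + 1) = e :=
    ⟨e ^ ((n + 1 : ℕ) : ℝ)⁻¹, Real.rpow_pos_of_pos he0 _,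
      Real.rpow_inv_natCast_pow he0.le (Nat.succ_ne_zero n)⟩
  have hterm : ∀ q ∈ (Finset.univ : Finset (Fin (n + 1) ⊕ Fin (n + 1))).offDiag,
      ∀ t ∈ X.image φ, ((shiftSolutions (n + 1) fun i => if i ∈ ({q.1, q.2} : Finset _) then
        {x ∈ X | φ x = t} else X).card : ℝ) ≤
          M * ({x ∈ X | φ x = t} : Finset ℚ).card * R ^ n := by
    intro q hq t ht
    have hq' : q.1 ≠ q.2 := (Finset.mem_offDiag.1 hq).2.2
    have hpos : 0 < ({x ∈ X | φ x = t} : Finset ℚ).card := by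
      obtain ⟨x, hx, hxt⟩ := Finset.mem_image.1 ht
      exact Finset.card_pos.2 ⟨x, Finset.mem_filter.2 ⟨hx, hxt⟩⟩
    refine le_of_mul_le_mul_left ((hSS _ fun i => ?_).trans ?_) hN
    · split_ifs
      · exact Finset.filter_subset _ _
      · exact subset_rfl
    have hprod : ∀ ω, ∏ i, S (if i ∈ ({q.1, q.2} : Finset _) then {x ∈ X | φ x = t} else X) ω =
        S {x ∈ X | φ x = t} ω ^ 2 * (S X ω ^ 2) ^ n := by
      intro ω
      simp only [apply_ite (fun Y => S Y ω)]
      rw [Finset.prod_ite, Finset.prod_const, Finset.prod_const, Finset.filter_not,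
        Finset.filter_mem_eq_inter, Finset.univ_inter, Finset.card_sdiff_of_subset
          (Finset.subset_univ _), Finset.card_pair hq', ← pow_mul]
      congr 2
      simp
      omega
    simp only [hprod]
    refine sum_mul_pow_le (fun ω => S X ω ^ 2) (fun ω => S {x ∈ X | φ x = t} ω ^ 2)
      (fun ω => by positivity) (fun ω => by positivity) n hR (by positivity) ?_ ?_
    · rw [← hSE X subset_rfl, hRe]
    · rw [← hSE _ (Finset.filter_subset _ _)]
      exact mul_le_mul_of_nonneg_left (h t) hN.le
  have hcount : e ≤ ∑ q ∈ (Finset.univ : Finset (Fin (n + 1) ⊕ Fin (n + 1))).offDiag,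
      ∑ t ∈ X.image φ, M * ({x ∈ X | φ x = t} : Finset ℚ).card * R ^ n := by
    refine (Nat.cast_le.2 (shiftEnergy_le_sum_card_of_repeat φ hφ)).trans ?_
    push_cast
    exact Finset.sum_le_sum fun q hq => Finset.sum_le_sum fun t ht => hterm q hq t ht
  have hcard : (∑ t ∈ X.image φ, (({x ∈ X | φ x = t} : Finset ℚ).card : ℝ)) = X.card := by
    exact_mod_cast (Finset.card_eq_sum_card_image φ X).symm
  rw [Finset.sum_const, Finset.offDiag_card, nsmul_eq_mul, ← Finset.sum_mul, ← Finset.mul_sum,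
    hcard, ← hRe, pow_succ, mul_comm (R ^ n) R, ← mul_assoc] at hcount
  have hfin := le_of_mul_le_mul_right hcount (pow_pos hR n)
  rw [← hRe]
  refine pow_le_pow_left₀ hR.le (hfin.trans_eq ?_) _
  rw [Finset.card_univ, Fintype.card_sum, Fintype.card_fin, Nat.cast_sub (Nat.le_mul_self _)]
  push_cast
  ring

/-- Cauchy–Schwarz: few solutions force a large product set. -/
lemma card_pow_le_card_kfoldProd_mul_shiftEnergy (k : ℕ) (A : Finset ℚ) :
    A.card ^ (2 * k) ≤ (kfoldProd k (A.image fun a => a + 1)).card * shiftEnergy k A := by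
  classical
  let T : Finset (Fin k → ℚ) := Fintype.piFinset fun _ => A
  let f : (Fin k → ℚ) → ℚ := fun x => ∏ i, (x i + 1)
  let B := kfoldProd k (A.image fun a => a + 1)
  have hf : ∀ x ∈ T, f x ∈ B := by
    intro x hx
    refine Finset.mem_image.2 ⟨fun i => x i + 1, Fintype.mem_piFinset.2 fun i => ?_, rfl⟩
    exact Finset.mem_image_of_mem _ (Fintype.mem_piFinset.1 hx i)
  have hT : T.card = ∑ b ∈ B, ({x ∈ T | f x = b} : Finset _).card :=
    Finset.card_eq_sum_card_fiberwise hf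
  have hTc : T.card = A.card ^ k := by simp [T]
  have hE : ∑ b ∈ B, ({x ∈ T | f x = b} : Finset _).card ^ 2 = shiftEnergy k A := by
    have h1 : shiftEnergy k A = ({p ∈ T ×ˢ T | f p.1 = f p.2} : Finset _).card := by
      refine Finset.card_bij' (fun x _ => (x ∘ Sum.inl, x ∘ Sum.inr))
        (fun p _ => Sum.elim p.1 p.2) ?_ ?_ ?_ ?_
      · intro x hx
        simpa [shiftSolutions, T, f, Fintype.mem_piFinset] using hx
      · intro p hp
        simpa [shiftSolutions, T, f, Fintype.mem_piFinset] using hp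
      · intro x _
        exact Sum.elim_comp_inl_inr x
      · intro p _
        rfl
    rw [h1, Finset.card_eq_sum_card_fiberwise (f := fun p => f p.1) (t := B)]
    · refine Finset.sum_congr rfl fun b _ => ?_
      rw [sq, ← Finset.card_product]
      congr 1
      ext p
      simp only [Finset.mem_filter, Finset.mem_product]
      constructor
      · rintro ⟨⟨h1, h2⟩, h3, h4⟩
        exact ⟨⟨⟨h1, h3⟩, h2.trans h4.symm⟩, h2⟩
      · rintro ⟨⟨⟨h1, h3⟩, h4⟩, h2⟩
        exact ⟨⟨h1, h2⟩, h3, h4.symm.trans h2⟩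
    · intro p hp
      exact hf _ (Finset.mem_product.1 (Finset.mem_filter.1 hp).1).1
  rw [mul_comm 2 k, pow_mul, ← hTc, hT, ← hE]
  exact sq_sum_le_card_mul_sum_sq

/-- The vector of all `p`-adic valuations of a rational number. -/
def valVec (a : ℚ) (p : Nat.Primes) : ℚ := padicValRat p a

lemma valVec_mul {a b : ℚ} (ha : a ≠ 0) (hb : b ≠ 0) : valVec (a * b) = valVec a + valVec b := by
  ext p
  have : Fact (p : ℕ).Prime := ⟨p.2⟩
  simp [valVec, padicValRat.mul ha hb]

lemma valVec_abs (a : ℚ) : valVec |a| = valVec a := by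
  ext p
  rcases abs_choice a with h | h <;> simp [valVec, h]

lemma valVec_prod {ι : Type*} (s : Finset ι) (f : ι → ℚ) (hf : ∀ i ∈ s, f i ≠ 0) :
    valVec (∏ i ∈ s, f i) = ∑ i ∈ s, valVec (f i) := by
  classical
  induction s using Finset.induction_on with
  | empty =>
    ext p
    simp [valVec]
  | insert i s hi ih =>
    rw [Finset.prod_insert hi, Finset.sum_insert hi, valVec_mul (hf i (by simp))
      (Finset.prod_ne_zero_iff.2 fun j hj => hf j (by simp [hj])),
      ih fun j hj => hf j (by simp [hj])]

lemma abs_eq_one_of_valVec_eq_zero {a : ℚ} (ha : a ≠ 0) (h : valVec a = 0) : |a| = 1 := by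
  have hn : a.num.natAbs = a.den := by
    refine (Nat.eq_iff_prime_padicValNat_eq _ _ (by simpa using ha) a.den_nz).2 fun p hp => ?_
    have h1 : (padicValRat p a : ℚ) = 0 := congrFun h ⟨p, hp⟩
    rw [Int.cast_eq_zero, padicValRat, padicValInt, sub_eq_zero] at h1
    exact_mod_cast h1
  have h1 : |a| * a.den = a.den := by
    conv_rhs => rw [← hn]
    rw [Nat.cast_natAbs, Int.cast_abs, ← Rat.mul_den_eq_num, abs_mul, Nat.abs_cast]
  exact mul_right_cancel₀ (Nat.cast_ne_zero.2 a.den_nz) (h1.trans (one_mul _).symm)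

lemma abs_eq_abs_of_valVec_eq {a b : ℚ} (ha : a ≠ 0) (hb : b ≠ 0) (h : valVec a = valVec b) :
    |a| = |b| := by
  have h1 : valVec (a / b) = 0 := by
    have := valVec_mul (div_ne_zero ha hb) hb
    rw [div_mul_cancel₀ _ hb, h] at this
    exact left_eq_add.1 (this.trans (add_comm _ _))
  have h2 := abs_eq_one_of_valVec_eq_zero (div_ne_zero ha hb) h1
  rwa [abs_div, div_eq_one_iff_eq (abs_ne_zero.2 hb)] at h2

lemma eq_of_valVec_eq_of_sign_eq {a b : ℚ} (ha : a ≠ 0) (hb : b ≠ 0) (h : valVec a = valVec b)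
    (hs : SignType.sign a = SignType.sign b) : a = b := by
  rw [← sign_mul_abs a, ← sign_mul_abs b, hs, abs_eq_abs_of_valVec_eq ha hb h]

/-- A subspace of dimension `d` of a coordinate space is separated by `d` coordinates. -/
lemma exists_separating_coordinates {ι : Type*} (d : ℕ) :
    ∀ (W : Submodule ℚ (ι → ℚ)) [FiniteDimensional ℚ W], Module.finrank ℚ W ≤ d →
      ∃ P : Finset ι, P.card ≤ d ∧ ∀ w ∈ W, (∀ p ∈ P, w p = 0) → w = 0 := by
  classical
  induction d with
  | zero =>
    intro W _ hW
    refine ⟨∅, le_rfl, fun w hw _ => ?_⟩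
    rw [Submodule.finrank_eq_zero.1 (Nat.le_zero.1 hW)] at hw
    exact (Submodule.mem_bot ℚ).1 hw
  | succ d ih =>
    intro W _ hW
    by_cases hbot : W = ⊥
    · exact ⟨∅, Nat.zero_le _, fun w hw _ => (Submodule.mem_bot ℚ).1 (hbot ▸ hw)⟩
    obtain ⟨w, hw, hw0⟩ := Submodule.exists_mem_ne_zero_of_ne_bot hbot
    obtain ⟨p, hp⟩ := Function.ne_iff.1 hw0
    let U : Submodule ℚ (ι → ℚ) := W ⊓ LinearMap.ker (LinearMap.proj p)
    have hlt : U < W := by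
      refine lt_of_le_of_ne inf_le_left fun h => hp ?_
      have : w ∈ U := h ▸ hw
      exact this.2
    have : FiniteDimensional ℚ U := Submodule.finiteDimensional_of_le hlt.le
    obtain ⟨P, hP, hsep⟩ := ih U (by have := Submodule.finrank_lt_finrank_of_lt hlt; omega)
    refine ⟨insert p P, (Finset.card_insert_le _ _).trans (by omega), fun x hx h => ?_⟩
    exact hsep x ⟨hx, h p (Finset.mem_insert_self _ _)⟩ fun q hq =>
      h q (Finset.mem_insert_of_mem hq)

lemma padicNorm_prod_one_add_sub_one_lt {ι : Type*} {p : ℕ} [Fact p.Prime] {δ : ℚ} (hδ0 : 0 < δ)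
    (hδ1 : δ ≤ 1) (s : Finset ι) (y : ι → ℚ) (hy : ∀ i ∈ s, padicNorm p (y i) < δ) :
    padicNorm p (∏ i ∈ s, (1 + y i) - 1) < δ := by
  classical
  induction s using Finset.induction_on with
  | empty => simpa using hδ0
  | insert i s hi ih =>
    have h1 := ih fun j hj => hy j (by simp [hj])
    have h2 := hy i (by simp)
    rw [Finset.prod_insert hi, show (1 + y i) * ∏ j ∈ s, (1 + y j) - 1 =
      (∏ j ∈ s, (1 + y j) - 1) + (y i + y i * (∏ j ∈ s, (1 + y j) - 1)) by ring]
    have h3 : padicNorm p (y i * (∏ j ∈ s, (1 + y j) - 1)) < δ := by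
      rw [padicNorm.mul]
      have := padicNorm.nonneg (p := p) (y i)
      have := padicNorm.nonneg (p := p) (∏ j ∈ s, (1 + y j) - 1)
      nlinarith
    exact padicNorm.nonarchimedean.trans_lt
      (max_lt h1 (padicNorm.nonarchimedean.trans_lt (max_lt h2 h3)))

lemma not_prod_one_add_eq_of_dominant {ι κ : Type*} {p : ℕ} [Fact p.Prime]
    (s : Finset ι) (t : Finset κ) (x : ι → ℚ) (y : κ → ℚ) {z : ℚ} (hz0 : z ≠ 0)
    (hz : padicNorm p z ≤ 1) (hx : ∀ i ∈ s, padicNorm p (x i) < padicNorm p z)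
    (hy : ∀ i ∈ t, padicNorm p (y i) < padicNorm p z) :
    (1 + z) * ∏ i ∈ s, (1 + x i) ≠ ∏ i ∈ t, (1 + y i) := by
  intro h
  have hpos : 0 < padicNorm p z :=
    (padicNorm.nonneg z).lt_of_ne (Ne.symm (padicNorm.nonzero hz0))
  have h1 := padicNorm_prod_one_add_sub_one_lt hpos hz s x hx
  have h2 := padicNorm_prod_one_add_sub_one_lt hpos hz t y hy
  set U := ∏ i ∈ s, (1 + x i)
  set V := ∏ i ∈ t, (1 + y i)
  have h3 : z = (V - 1) - ((U - 1) + z * (U - 1)) := by linear_combination h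
  have h4 : padicNorm p (z * (U - 1)) < padicNorm p z := by
    rw [padicNorm.mul]
    nlinarith [padicNorm.nonneg (p := p) (U - 1)]
  have h5 : padicNorm p z < padicNorm p z := by
    conv_lhs => rw [h3]
    exact padicNorm.sub.trans_lt
      (max_lt h2 (padicNorm.nonarchimedean.trans_lt (max_lt h1 h4)))
  exact lt_irrefl _ h5

/-- If all valuations at `p` are positive, the smallest one occurs twice. -/
lemma exists_padicValRat_eq_of_prod_one_add_eq {k : ℕ} (hk : 0 < k) {p : ℕ} [Fact p.Prime]
    (x : Fin k ⊕ Fin k → ℚ) (hx : ∀ i, 0 < padicValRat p (x i))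
    (h : ∏ i, (1 + x (.inl i)) = ∏ i, (1 + x (.inr i))) :
    ∃ i j, i ≠ j ∧ padicValRat p (x i) = padicValRat p (x j) := by
  classical
  by_contra! hne
  have : Nonempty (Fin k ⊕ Fin k) := ⟨.inl ⟨0, hk⟩⟩
  have hx0 : ∀ i, x i ≠ 0 := fun i h0 => by
    have := hx i
    simp [h0] at this
  have hp1 : (1 : ℚ) < p := by exact_mod_cast (Fact.out : p.Prime).one_lt
  obtain ⟨i₀, hi₀⟩ := Finite.exists_min fun i => padicValRat p (x i)
  have hlt : ∀ j, j ≠ i₀ → padicNorm p (x j) < padicNorm p (x i₀) := by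
    intro j hj
    rw [padicNorm.eq_zpow_of_nonzero (hx0 j), padicNorm.eq_zpow_of_nonzero (hx0 i₀)]
    refine zpow_lt_zpow_right₀ hp1 ?_
    have := lt_of_le_of_ne (hi₀ j) (hne i₀ j hj.symm)
    omega
  have hle : padicNorm p (x i₀) ≤ 1 := by
    rw [padicNorm.eq_zpow_of_nonzero (hx0 i₀)]
    exact zpow_le_one_of_nonpos₀ hp1.le (by have := hx i₀; omega)
  rcases i₀ with i₀ | i₀
  · refine not_prod_one_add_eq_of_dominant (Finset.univ.erase i₀) Finset.univ
      (fun i => x (.inl i)) (fun i => x (.inr i)) (hx0 _) hle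
      (fun i hi => hlt _ (by simpa using hi)) (fun i _ => hlt _ (by simp)) ?_
    rw [← h, Finset.mul_prod_erase _ (fun i => 1 + x (.inl i)) (Finset.mem_univ i₀)]
  · refine not_prod_one_add_eq_of_dominant (Finset.univ.erase i₀) Finset.univ
      (fun i => x (.inr i)) (fun i => x (.inl i)) (hx0 _) hle
      (fun i hi => hlt _ (by simpa using hi)) (fun i _ => hlt _ (by simp)) ?_
    rw [h, Finset.mul_prod_erase _ (fun i => 1 + x (.inr i)) (Finset.mem_univ i₀)]

/-- If `|b|` is maximal in `A`, then the elements `t` of `B = |A \ {±b}|` for which `|b| * t` is not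
a product of two elements of `B` generate all of `A`, relative to the base point `b`. -/
lemma finrank_vectorSpan_le_card_irreducible {A : Finset ℚ} (hA0 : (0 : ℚ) ∉ A) {b : ℚ}
    (hb : b ∈ A) (hmax : ∀ a ∈ A, |a| ≤ |b|) {B : Finset ℚ}
    (hB : B = ({a ∈ A | |a| ≠ |b|} : Finset ℚ).image fun a => |a|) :
    Module.finrank ℚ (vectorSpan ℚ (valVec '' (A : Set ℚ))) ≤
      ({t ∈ B | ∀ y ∈ B, ∀ z ∈ B, |b| * t ≠ y * z} : Finset ℚ).card := by
  classical
  set S : Finset ℚ := {t ∈ B | ∀ y ∈ B, ∀ z ∈ B, |b| * t ≠ y * z} with hS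
  have hbpos : 0 < |b| := abs_pos.2 fun h => hA0 (h ▸ hb)
  have hBpos : ∀ t ∈ B, 0 < t ∧ t < |b| := by
    intro t ht
    rw [hB] at ht
    obtain ⟨a, ha, rfl⟩ := Finset.mem_image.1 ht
    obtain ⟨haA, hab⟩ := Finset.mem_filter.1 ha
    exact ⟨abs_pos.2 fun h => hA0 (h ▸ haA), lt_of_le_of_ne (hmax a haA) hab⟩
  let U : Submodule ℚ (Nat.Primes → ℚ) :=
    Submodule.span ℚ (S.image fun s => valVec s - valVec b : Finset (Nat.Primes → ℚ))
  have hU : ∀ t ∈ B, valVec t - valVec b ∈ U := by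
    by_contra! hcon
    obtain ⟨t₁, ht₁, ht₁U⟩ := hcon
    obtain ⟨t, ht, htmax⟩ := Finset.exists_max_image {t ∈ B | valVec t - valVec b ∉ U} id
      ⟨t₁, Finset.mem_filter.2 ⟨ht₁, ht₁U⟩⟩
    obtain ⟨htB, htU⟩ := Finset.mem_filter.1 ht
    have htS : t ∉ S := fun h =>
      htU (Submodule.subset_span (Finset.mem_coe.2 (Finset.mem_image_of_mem _ h)))
    have hfac : ∃ y ∈ B, ∃ z ∈ B, |b| * t = y * z := by
      by_contra! h
      exact htS (Finset.mem_filter.2 ⟨htB, h⟩)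
    obtain ⟨y, hy, z, hz, hyz⟩ := hfac
    obtain ⟨hy0, hyb⟩ := hBpos y hy
    obtain ⟨hz0, hzb⟩ := hBpos z hz
    obtain ⟨ht0, -⟩ := hBpos t htB
    have hyU : valVec y - valVec b ∈ U := by
      by_contra h
      have : y ≤ t := htmax y (Finset.mem_filter.2 ⟨hy, h⟩)
      nlinarith
    have hzU : valVec z - valVec b ∈ U := by
      by_contra h
      have : z ≤ t := htmax z (Finset.mem_filter.2 ⟨hz, h⟩)
      nlinarith
    refine htU ?_
    have hval := congrArg valVec hyz
    rw [valVec_mul hbpos.ne' ht0.ne', valVec_mul hy0.ne' hz0.ne', valVec_abs] at hval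
    have : valVec t - valVec b = (valVec y - valVec b) + (valVec z - valVec b) := by
      linear_combination hval
    rw [this]
    exact U.add_mem hyU hzU
  have hle : vectorSpan ℚ (valVec '' (A : Set ℚ)) ≤ U := by
    rw [vectorSpan_eq_span_vsub_set_right ℚ (Set.mem_image_of_mem valVec (Finset.mem_coe.2 hb)),
      Submodule.span_le]
    rintro _ ⟨_, ⟨a, ha, rfl⟩, rfl⟩
    simp only [vsub_eq_sub, SetLike.mem_coe]
    rw [← valVec_abs a]
    by_cases hab : |a| = |b|
    · rw [hab, valVec_abs, sub_self]
      exact U.zero_mem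
    · refine hU _ ?_
      rw [hB]
      exact Finset.mem_image_of_mem _ (Finset.mem_filter.2 ⟨ha, hab⟩)
  exact (Submodule.finrank_mono hle).trans
    ((finrank_span_finset_le_card _).trans Finset.card_image_le)

lemma card_filter_abs_eq_le_two (A : Finset ℚ) (b : ℚ) :
    ({a ∈ A | |a| = |b|} : Finset ℚ).card ≤ 2 := by
  refine (Finset.card_le_card (t := {b, -b}) fun a ha => ?_).trans Finset.card_le_two
  simpa using abs_eq_abs.1 (Finset.mem_filter.1 ha).2

lemma card_mul_irreducible_add_le_card_mul {A : Finset ℚ} (hA0 : (0 : ℚ) ∉ A) {b : ℚ}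
    (hb : b ∈ A) (hmax : ∀ a ∈ A, |a| ≤ |b|) :
    ({a ∈ A | |a| = |b|} : Finset ℚ).card *
        (Module.finrank ℚ (vectorSpan ℚ (valVec '' (A : Set ℚ))) + 1) +
      (({a ∈ A | |a| ≠ |b|} : Finset ℚ) * {a ∈ A | |a| ≠ |b|}).card ≤ (A * A).card := by
  classical
  set R : Finset ℚ := {a ∈ A | |a| = |b|} with hR
  set A' : Finset ℚ := {a ∈ A | |a| ≠ |b|} with hA'
  set B : Finset ℚ := A'.image fun a => |a| with hB
  have hrank := finrank_vectorSpan_le_card_irreducible hA0 hb hmax hB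
  set S : Finset ℚ := {t ∈ B | ∀ y ∈ B, ∀ z ∈ B, |b| * t ≠ y * z} with hS
  have hbpos : 0 < |b| := abs_pos.2 fun h => hA0 (h ▸ hb)
  have hA'lt : ∀ a ∈ A', |a| < |b| := fun a ha =>
    lt_of_le_of_ne (hmax a (Finset.mem_filter.1 ha).1) (Finset.mem_filter.1 ha).2
  have hlift : ∀ t ∈ insert |b| S, ∃ a ∈ A, |a| = t := by
    intro t ht
    rcases Finset.mem_insert.1 ht with rfl | ht
    · exact ⟨b, hb, rfl⟩
    · obtain ⟨a, ha, hat⟩ := Finset.mem_image.1 (Finset.mem_filter.1 ht).1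
      exact ⟨a, (Finset.mem_filter.1 ha).1, hat⟩
  choose! ψ hψA hψ using hlift
  have hbS : |b| ∉ S := fun h => by
    obtain ⟨a, ha, hat⟩ := Finset.mem_image.1 (Finset.mem_filter.1 h).1
    exact (hA'lt a ha).ne hat
  let f : ℚ × ℚ → ℚ := fun q => q.1 * ψ q.2
  have hfabs : ∀ q ∈ R ×ˢ insert |b| S, |f q| = |b| * q.2 := by
    intro q hq
    obtain ⟨h1, h2⟩ := Finset.mem_product.1 hq
    rw [abs_mul, (Finset.mem_filter.1 h1).2, hψ _ h2]
  have hinj : Set.InjOn f (R ×ˢ insert |b| S : Finset (ℚ × ℚ)) := by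
    rintro ⟨r, t⟩ hq ⟨r', t'⟩ hq' h
    have h1 := (hfabs _ hq).symm.trans ((congrArg abs h).trans (hfabs _ hq'))
    have h2 : t = t' := mul_left_cancel₀ hbpos.ne' h1
    subst h2
    have h3 : ψ t ≠ 0 := fun h0 => hA0 (h0 ▸ hψA t (Finset.mem_product.1 hq).2)
    exact Prod.ext (mul_right_cancel₀ h3 h) rfl
  have hdisj : Disjoint ((R ×ˢ insert |b| S).image f) (A' * A') := by
    rw [Finset.disjoint_left]
    intro c hc hc'
    obtain ⟨q, hq, rfl⟩ := Finset.mem_image.1 hc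
    obtain ⟨y, hy, z, hz, hyz⟩ := Finset.mem_mul.1 hc'
    have h1 := hfabs q hq
    rw [← hyz, abs_mul] at h1
    rcases Finset.mem_insert.1 (Finset.mem_product.1 hq).2 with h2 | h2
    · rw [h2] at h1
      nlinarith [hA'lt y hy, hA'lt z hz, abs_nonneg y, abs_nonneg z]
    · exact (Finset.mem_filter.1 h2).2 _ (Finset.mem_image_of_mem _ hy) _
        (Finset.mem_image_of_mem _ hz) h1.symm
  have hsub : (R ×ˢ insert |b| S).image f ∪ A' * A' ⊆ A * A := by
    refine Finset.union_subset ?_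
      (Finset.mul_subset_mul (Finset.filter_subset _ _) (Finset.filter_subset _ _))
    intro c hc
    obtain ⟨q, hq, rfl⟩ := Finset.mem_image.1 hc
    obtain ⟨h1, h2⟩ := Finset.mem_product.1 hq
    exact Finset.mul_mem_mul (Finset.mem_filter.1 h1).1 (hψA _ h2)
  have hcard := Finset.card_le_card hsub
  rw [Finset.card_union_of_disjoint hdisj, Finset.card_image_of_injOn hinj, Finset.card_product,
    Finset.card_insert_of_notMem hbS] at hcard
  refine le_trans ?_ hcard
  gcongr

lemma card_add_le_card_mul_of_notMem_affineSpan {A : Finset ℚ} (hA0 : (0 : ℚ) ∉ A) {b : ℚ}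
    (hb : b ∈ A) (hmax : ∀ a ∈ A, |a| ≤ |b|)
    (hspan : valVec b ∉ affineSpan ℚ (valVec '' (({a ∈ A | |a| ≠ |b|} : Finset ℚ) : Set ℚ))) :
    A.card + (({a ∈ A | |a| ≠ |b|} : Finset ℚ) * {a ∈ A | |a| ≠ |b|}).card ≤ (A * A).card := by
  classical
  set A' : Finset ℚ := {a ∈ A | |a| ≠ |b|} with hA'
  have hne : ∀ a ∈ A, a ≠ 0 := fun a ha h => hA0 (h ▸ ha)
  have hA'A : A' ⊆ A := Finset.filter_subset _ _
  have hA'lt : ∀ a ∈ A', |a| < |b| := fun a ha =>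
    lt_of_le_of_ne (hmax a (hA'A ha)) (Finset.mem_filter.1 ha).2
  have hdisj : Disjoint (A.image fun a => b * a) (A' * A') := by
    rw [Finset.disjoint_left]
    intro c hc hc'
    obtain ⟨x, hx, rfl⟩ := Finset.mem_image.1 hc
    obtain ⟨y, hy, z, hz, hyz⟩ := Finset.mem_mul.1 hc'
    by_cases hxb : |x| = |b|
    · have h1 := congrArg abs hyz
      rw [abs_mul, abs_mul, hxb] at h1
      nlinarith [hA'lt y hy, hA'lt z hz, abs_nonneg y, abs_nonneg z]
    · have hx' : x ∈ A' := Finset.mem_filter.2 ⟨hx, hxb⟩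
      have h1 := congrArg valVec hyz
      rw [valVec_mul (hne y (hA'A hy)) (hne z (hA'A hz)), valVec_mul (hne b hb) (hne x hx)] at h1
      refine hspan ?_
      have h2 : valVec b = (1 : ℚ) • (valVec y -ᵥ valVec x) +ᵥ valVec z := by
        rw [one_smul, vsub_eq_sub, vadd_eq_add]
        linear_combination -h1
      rw [h2]
      have hmem : ∀ a ∈ A', valVec a ∈ affineSpan ℚ (valVec '' (A' : Set ℚ)) := fun a ha =>
        subset_affineSpan ℚ _ (Set.mem_image_of_mem _ ha)
      exact AffineSubspace.smul_vsub_vadd_mem _ _ (hmem y hy) (hmem x hx') (hmem z hz)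
  have hsub : (A.image fun a => b * a) ∪ A' * A' ⊆ A * A := by
    refine Finset.union_subset ?_ (Finset.mul_subset_mul hA'A hA'A)
    intro c hc
    obtain ⟨x, hx, rfl⟩ := Finset.mem_image.1 hc
    exact Finset.mul_mem_mul hb hx
  have hcard := Finset.card_le_card hsub
  rwa [Finset.card_union_of_disjoint hdisj,
    Finset.card_image_of_injective _ (mul_right_injective₀ (hne b hb))] at hcard

/-- Freiman's lemma for the multiplicative group of the rationals. -/
lemma freiman_lemma_rat (A : Finset ℚ) (hA0 : (0 : ℚ) ∉ A) :
    ∀ d ≤ Module.finrank ℚ (vectorSpan ℚ (valVec '' (A : Set ℚ))),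
      (d + 1) * A.card ≤ (A * A).card + d * (d + 1) := by
  classical
  induction A using Finset.strongInduction with
  | H A ih =>
  intro d hd
  rcases A.eq_empty_or_nonempty with rfl | hAne
  · simp
  obtain ⟨b, hb, hmax⟩ := Finset.exists_max_image A (fun a => |a|) hAne
  have hR2 := card_filter_abs_eq_le_two A b
  have hsplit := Finset.card_filter_add_card_filter_not (s := A) (fun a => |a| = |b|)
  have hnew := card_mul_irreducible_add_le_card_mul hA0 hb hmax
  have hnew' := card_add_le_card_mul_of_notMem_affineSpan hA0 hb hmax
  set R : Finset ℚ := {a ∈ A | |a| = |b|}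
  set A' : Finset ℚ := {a ∈ A | |a| ≠ |b|} with hA'
  have hA'A : A' ⊆ A := Finset.filter_subset _ _
  have hss : A' ⊂ A := Finset.ssubset_iff_subset_ne.2 ⟨hA'A, fun h => by
    have := h ▸ hb
    simp [hA'] at this⟩
  have hIH := ih A' hss fun h => hA0 (hA'A h)
  have hvec : valVec '' (A : Set ℚ) ⊆ insert (valVec b) (valVec '' (A' : Set ℚ)) := by
    rintro _ ⟨a, ha, rfl⟩
    by_cases hab : |a| = |b|
    · left
      rw [← valVec_abs, hab, valVec_abs]
    · right
      exact Set.mem_image_of_mem _ (Finset.mem_coe.2 (Finset.mem_filter.2 ⟨ha, hab⟩))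
  have hfin : (valVec '' (A' : Set ℚ)).Finite := A'.finite_toSet.image _
  have : FiniteDimensional ℚ (vectorSpan ℚ (valVec '' (A' : Set ℚ))) :=
    finiteDimensional_vectorSpan_of_finite ℚ hfin
  have : FiniteDimensional ℚ (vectorSpan ℚ (insert (valVec b) (valVec '' (A' : Set ℚ)))) :=
    finiteDimensional_vectorSpan_of_finite ℚ (hfin.insert _)
  have hmono := Submodule.finrank_mono (vectorSpan_mono ℚ hvec)
  rcases le_or_gt d (Module.finrank ℚ (vectorSpan ℚ (valVec '' (A' : Set ℚ)))) with hdA' | hdA'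
  · have h1 := hIH d hdA'
    have h2 : R.card * (d + 1) ≤
        R.card * (Module.finrank ℚ (vectorSpan ℚ (valVec '' (A : Set ℚ))) + 1) := by gcongr
    nlinarith
  · have hle := finrank_vectorSpan_insert_le_set ℚ (valVec '' (A' : Set ℚ)) (valVec b)
    obtain ⟨e, rfl⟩ : ∃ e, d = e + 1 := ⟨d - 1, by omega⟩
    have h1 := hIH e (by omega)
    have h2 := hnew' fun hmem => by
      rw [vectorSpan_insert_eq_vectorSpan hmem] at hmono
      omega
    nlinarith

lemma padicValRat_add_one_of_neg {p : ℕ} [Fact p.Prime] {x : ℚ} (hx : padicValRat p x < 0)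
    (hx1 : x + 1 ≠ 0) : padicValRat p (x + 1) = padicValRat p x := by
  have hx0 : x ≠ 0 := fun h => by simp [h] at hx
  exact padicValRat.add_eq_of_lt hx1 hx0 one_ne_zero (by simpa using hx)

lemma shiftEnergy_le_card_pow (k : ℕ) (X : Finset ℚ) : shiftEnergy k X ≤ X.card ^ (2 * k) := by
  refine (Finset.card_filter_le _ _).trans ?_
  rw [Fintype.card_piFinset, Finset.prod_const, Finset.card_univ, Fintype.card_sum,
    Fintype.card_fin, two_mul]

/-- On a set where each valuation at a prime of `P` is negative or constant, a solution of
`∏ (x i + 1) = ∏ (y i + 1)` also satisfies `∏ x i = ∏ y i`. -/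
lemma prod_eq_prod_of_mem_shiftSolutions {k : ℕ} {A : Finset ℚ} (hA0 : (0 : ℚ) ∉ A)
    (hA1 : (-1 : ℚ) ∉ A) {P : Finset Nat.Primes}
    (hsep : ∀ w ∈ vectorSpan ℚ (valVec '' (A : Set ℚ)), (∀ p ∈ P, w p = 0) → w = 0)
    {X : Finset ℚ} (hXA : X ⊆ A)
    (hsign : ∀ x ∈ X, ∀ y ∈ X, SignType.sign x = SignType.sign y)
    (hP : ∀ p ∈ P, (∀ x ∈ X, padicValRat p x < 0) ∨
      ∀ x ∈ X, ∀ y ∈ X, padicValRat p x = padicValRat p y)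
    {x : Fin k ⊕ Fin k → ℚ} (hx : x ∈ shiftSolutions k fun _ => X) :
    ∏ i, x (.inl i) = ∏ i, x (.inr i) := by
  obtain ⟨hxX, hxe⟩ := Finset.mem_filter.1 hx
  rw [Fintype.mem_piFinset] at hxX
  have hx0 : ∀ i, x i ≠ 0 := fun i h => hA0 (h ▸ hXA (hxX i))
  have hx1 : ∀ i, x i + 1 ≠ 0 := fun i h => by
    have := hXA (hxX i)
    rw [eq_neg_of_add_eq_zero_left h] at this
    exact hA1 this
  have hw : ∑ i, (valVec (x (.inl i)) - valVec (x (.inr i))) = 0 := by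
    refine hsep _ (Submodule.sum_mem _ fun i _ => vsub_mem_vectorSpan ℚ
      (Set.mem_image_of_mem _ (hXA (hxX _))) (Set.mem_image_of_mem _ (hXA (hxX _)))) fun p hp => ?_
    have : Fact (p : ℕ).Prime := ⟨p.2⟩
    rw [Finset.sum_apply]
    rcases hP p hp with hneg | hconst
    · have h1 := congrFun (congrArg valVec hxe) p
      rw [valVec_prod _ _ fun i _ => hx1 _, valVec_prod _ _ fun i _ => hx1 _, Finset.sum_apply,
        Finset.sum_apply] at h1
      simp only [valVec, padicValRat_add_one_of_neg (hneg _ (hxX _)) (hx1 _)] at h1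
      simp only [Pi.sub_apply, Finset.sum_sub_distrib, valVec, h1, sub_self]
    · refine Finset.sum_eq_zero fun i _ => ?_
      simp only [Pi.sub_apply, valVec, hconst _ (hxX (.inl i)) _ (hxX (.inr i)), sub_self]
  refine eq_of_valVec_eq_of_sign_eq (Finset.prod_ne_zero_iff.2 fun i _ => hx0 _)
    (Finset.prod_ne_zero_iff.2 fun i _ => hx0 _) ?_ ?_
  · rw [valVec_prod _ _ fun i _ => hx0 _, valVec_prod _ _ fun i _ => hx0 _, ← sub_eq_zero,
      ← Finset.sum_sub_distrib, hw]
  · change signHom _ = signHom _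
    rw [map_prod, map_prod]
    exact Finset.prod_congr rfl fun i _ => hsign _ (hxX _) _ (hxX _)

/-- The energy of a set on which the signs of all elements and of all their valuations in `P` are
constant, as well as the valuations in `P \ Q`. -/
lemma shiftEnergy_le_of_sign_constant {k : ℕ} (hk : 0 < k) {A : Finset ℚ} (hA0 : (0 : ℚ) ∉ A)
    (hA1 : (-1 : ℚ) ∉ A) {P : Finset Nat.Primes}
    (hsep : ∀ w ∈ vectorSpan ℚ (valVec '' (A : Set ℚ)), (∀ p ∈ P, w p = 0) → w = 0) (n : ℕ) :
    ∀ Q ⊆ P, Q.card = n → ∀ X ⊆ A,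
      (∀ x ∈ X, ∀ y ∈ X, SignType.sign x = SignType.sign y) →
      (∀ p ∈ P, ∀ x ∈ X, ∀ y ∈ X,
        SignType.sign (padicValRat p x) = SignType.sign (padicValRat p y)) →
      (∀ p ∈ P, p ∉ Q → ∀ x ∈ X, ∀ y ∈ X, padicValRat p x = padicValRat p y) →
      (shiftEnergy k X : ℝ) ≤ ((2 * k * (2 * k - 1)) ^ n * X.card) ^ k := by
  classical
  induction n with
  | zero =>
    intro Q hQP hQ X hXA hsign _ hval
    rw [Finset.card_eq_zero.1 hQ] at hval
    have hX1 : X.card ≤ 1 := by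
      refine Finset.card_le_one.2 fun x hx y hy => ?_
      refine eq_of_valVec_eq_of_sign_eq (fun h => hA0 (h ▸ hXA hx)) (fun h => hA0 (h ▸ hXA hy)) ?_
        (hsign x hx y hy)
      refine sub_eq_zero.1 (hsep _ (vsub_mem_vectorSpan ℚ (Set.mem_image_of_mem _ (hXA hx))
        (Set.mem_image_of_mem _ (hXA hy))) fun p hp => ?_)
      simp only [Pi.sub_apply, valVec, hval p hp (Finset.notMem_empty p) x hx y hy, sub_self]
    rw [pow_zero, one_mul]
    exact_mod_cast (shiftEnergy_le_card_pow k X).trans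
      (pow_le_pow_of_le_one (Nat.zero_le _) hX1 (by omega))
  | succ n ih =>
    intro Q hQP hQ X hXA hsign hvsign hval
    have hk1 : (1 : ℝ) ≤ k := by exact_mod_cast hk
    have hC : (0 : ℝ) < 2 * k * (2 * k - 1) := mul_pos (by linarith) (by linarith)
    have hkey : ∃ p ∈ Q, ∀ x ∈ shiftSolutions k fun _ => X,
        ∃ i j, i ≠ j ∧ padicValRat p (x i) = padicValRat p (x j) := by
      obtain ⟨p₀, hp₀⟩ := Finset.card_pos.1 (hQ.symm ▸ Nat.succ_pos n : 0 < Q.card)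
      rcases X.eq_empty_or_nonempty with rfl | ⟨x₀, hx₀⟩
      · refine ⟨p₀, hp₀, fun x hx => ?_⟩
        have := Fintype.mem_piFinset.1 (Finset.mem_filter.1 hx).1 (.inl ⟨0, hk⟩)
        simp at this
      by_cases hpos : ∃ p ∈ Q, 0 ≤ padicValRat p x₀
      · obtain ⟨p, hpQ, hp⟩ := hpos
        have : Fact (p : ℕ).Prime := ⟨p.2⟩
        refine ⟨p, hpQ, fun x hx => ?_⟩
        obtain ⟨hxX, hxe⟩ := Finset.mem_filter.1 hx
        rw [Fintype.mem_piFinset] at hxX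
        have hs := fun i => hvsign p (hQP hpQ) (x i) (hxX i) x₀ hx₀
        rcases hp.eq_or_lt with hp | hp
        · rw [← hp, sign_zero] at hs
          refine ⟨.inl ⟨0, hk⟩, .inr ⟨0, hk⟩, by simp, ?_⟩
          rw [sign_eq_zero_iff.1 (hs _), sign_eq_zero_iff.1 (hs _)]
        · rw [sign_pos hp] at hs
          refine exists_padicValRat_eq_of_prod_one_add_eq hk x
            (fun i => sign_eq_one_iff.1 (hs i)) ?_
          simpa only [add_comm] using hxe
      · push Not at hpos
        have hneg : ∀ p ∈ Q, ∀ x ∈ X, padicValRat p x < 0 := by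
          intro p hp x hx
          have := hvsign p (hQP hp) x hx x₀ hx₀
          rw [sign_neg (hpos p hp)] at this
          exact sign_eq_neg_one_iff.1 this
        have : Fact (p₀ : ℕ).Prime := ⟨p₀.2⟩
        refine ⟨p₀, hp₀, fun x hx => ?_⟩
        have hprod := prod_eq_prod_of_mem_shiftSolutions hA0 hA1 hsep hXA hsign (fun p hp => by
          by_cases hpQ : p ∈ Q
          · exact .inl (hneg p hpQ)
          · exact .inr (hval p hp hpQ)) hx
        obtain ⟨hxX, hxe⟩ := Finset.mem_filter.1 hx
        rw [Fintype.mem_piFinset] at hxX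
        have hx0 : ∀ i, x i ≠ 0 := fun i h => hA0 (h ▸ hXA (hxX i))
        have hinv : ∀ i, 1 + (x i)⁻¹ = (x i + 1) / x i := fun i => by
          rw [add_div, div_self (hx0 i), one_div]
        obtain ⟨i, j, hij, h⟩ := exists_padicValRat_eq_of_prod_one_add_eq hk (p := p₀)
          (fun i => (x i)⁻¹) (fun i => by
            rw [padicValRat.inv]
            have := hneg p₀ hp₀ (x i) (hxX i)
            omega) (by simp only [hinv, Finset.prod_div_distrib, hxe, hprod])
        refine ⟨i, j, hij, ?_⟩
        simpa only [padicValRat.inv, neg_inj] using h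
    obtain ⟨p, hpQ, hrep⟩ := hkey
    have := shiftEnergy_le_of_repeat hk (fun h => hA1 (hXA h)) (pow_pos hC n)
      (fun a => padicValRat p a) hrep fun t => by
        have hsub : ({x ∈ X | padicValRat p x = t} : Finset ℚ) ⊆ X := Finset.filter_subset _ _
        refine ih (Q.erase p) ((Finset.erase_subset _ _).trans hQP)
          (by rw [Finset.card_erase_of_mem hpQ, hQ, Nat.add_sub_cancel]) _ (hsub.trans hXA)
          (fun x hx y hy => hsign x (hsub hx) y (hsub hy))
          (fun q hq x hx y hy => hvsign q hq x (hsub hx) y (hsub hy)) fun q hq hqQ x hx y hy => ?_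
        by_cases hqp : q = p
        · rw [hqp, (Finset.mem_filter.1 hx).2, (Finset.mem_filter.1 hy).2]
        · exact hval q hq (fun h => hqQ (Finset.mem_erase.2 ⟨hqp, h⟩)) x (hsub hx) y (hsub hy)
    rwa [pow_succ' (2 * (k : ℝ) * (2 * k - 1)) n]

lemma shiftEnergy_le_of_separating {k : ℕ} (hk : 0 < k) {A : Finset ℚ} (hA0 : (0 : ℚ) ∉ A)
    (hA1 : (-1 : ℚ) ∉ A) {P : Finset Nat.Primes}
    (hsep : ∀ w ∈ vectorSpan ℚ (valVec '' (A : Set ℚ)), (∀ p ∈ P, w p = 0) → w = 0) :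
    (shiftEnergy k A : ℝ) ≤ (9 * (9 * (2 * k * (2 * k - 1))) ^ P.card * A.card) ^ k := by
  have hk1 : (1 : ℝ) ≤ k := by exact_mod_cast hk
  have hC : (0 : ℝ) < 2 * k * (2 * k - 1) := mul_pos (by linarith) (by linarith)
  have h := shiftEnergy_le_of_split hk hA1 (pow_pos hC P.card).le
    (fun a => ((SignType.sign a, fun p => SignType.sign (padicValRat p a)) :
      SignType × (P → SignType))) fun t => by
    refine shiftEnergy_le_of_sign_constant hk hA0 hA1 hsep P.card P subset_rfl rfl _
      (Finset.filter_subset _ _) (fun x hx y hy => ?_) (fun p hp x hx y hy => ?_)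
      fun p hp hpP => absurd hp hpP
    · exact congrArg Prod.fst ((Finset.mem_filter.1 hx).2.trans (Finset.mem_filter.1 hy).2.symm)
    · exact congrFun (congrArg Prod.snd
        ((Finset.mem_filter.1 hx).2.trans (Finset.mem_filter.1 hy).2.symm)) ⟨p, hp⟩
  have hcard : (Fintype.card (SignType × (P → SignType)) : ℝ) = 3 * 3 ^ P.card := by
    have h3 : Fintype.card SignType = 3 := rfl
    simp [h3]
  rw [hcard] at h
  refine h.trans_eq ?_
  rw [mul_pow 9, show (9 : ℝ) = 3 ^ 2 by norm_num, ← pow_mul, mul_comm 2 P.card, pow_mul]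
  ring

lemma exists_separating_primes {A : Finset ℚ} (hA0 : (0 : ℚ) ∉ A) {K : ℕ} (hK : 0 < K)
    (hAA : (A * A).card ≤ K * A.card) (hA : K * (K + 1) < A.card) :
    ∃ P : Finset Nat.Primes, P.card ≤ K - 1 ∧
      ∀ w ∈ vectorSpan ℚ (valVec '' (A : Set ℚ)), (∀ p ∈ P, w p = 0) → w = 0 := by
  have : FiniteDimensional ℚ (vectorSpan ℚ (valVec '' (A : Set ℚ))) :=
    finiteDimensional_vectorSpan_of_finite ℚ (A.finite_toSet.image _)
  refine exists_separating_coordinates (K - 1) _ ?_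
  by_contra! h
  have := freiman_lemma_rat A hA0 K (by omega)
  nlinarith

theorem product_of_shift_lower_bound
    (A : Finset ℚ) (hA0 : (0 : ℚ) ∉ A) (hA1 : (-1 : ℚ) ∉ A)
    (K : ℕ) (hK : 0 < K) (hAA : (A * A).card ≤ K * A.card)
    (k : ℕ) (hk : 2 ≤ k) :
    (A.card : ℝ) ^ k / (8 * (k : ℝ) ^ 4) ^ (k * K) ≤
      ((kfoldProd k (A.image fun a => a + 1)).card : ℝ) := by
  have hk2 : (2 : ℝ) ≤ k := by exact_mod_cast hk
  have hk4 : (16 : ℝ) ≤ (k : ℝ) ^ 4 := by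
    calc (16 : ℝ) = 2 ^ 4 := by norm_num
      _ ≤ (k : ℝ) ^ 4 := by gcongr
  set D : ℝ := 8 * (k : ℝ) ^ 4 with hD
  have hD1 : 128 ≤ D := by linarith
  rcases A.eq_empty_or_nonempty with rfl | hne
  · simp [show k ≠ 0 by omega]
  have hApos : (0 : ℝ) < A.card := Nat.cast_pos.2 (Finset.card_pos.2 hne)
  rw [mul_comm k K, pow_mul, ← div_pow]
  rcases le_or_gt A.card (K * (K + 1)) with hsmall | hlarge
  · have h1 : (A.card : ℝ) ≤ D ^ K := by
      have h2 : K * (K + 1) ≤ 2 ^ K * 2 ^ K :=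
        Nat.mul_le_mul K.lt_two_pow_self.le K.lt_two_pow_self
      calc (A.card : ℝ) ≤ ((2 ^ K * 2 ^ K : ℕ) : ℝ) := Nat.cast_le.2 (hsmall.trans h2)
        _ = 4 ^ K := by push_cast; rw [← mul_pow]; norm_num
        _ ≤ D ^ K := by gcongr; linarith
    have h3 : (1 : ℝ) ≤ ((kfoldProd k (A.image fun a => a + 1)).card : ℝ) := by
      refine Nat.one_le_cast.2 (Finset.card_pos.2 ?_)
      exact Finset.Nonempty.image (Fintype.piFinset_nonempty.2 fun _ => hne.image _) _
    exact (pow_le_one₀ (by positivity) (div_le_one_of_le₀ h1 (by positivity))).trans h3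
  · obtain ⟨P, hPK, hsep⟩ := exists_separating_primes hA0 hK hAA hlarge
    have hE := shiftEnergy_le_of_separating (by omega) hA0 hA1 hsep (k := k)
    have hC : 9 * (2 * k * (2 * k - 1)) ≤ D := by
      have : (0 : ℝ) ≤ k * (8 * k ^ 3 - 36 * k + 18) := by
        refine mul_nonneg (by linarith) ?_
        nlinarith [mul_nonneg (sub_nonneg.2 hk2) (sub_nonneg.2 hk2)]
      rw [hD]
      linarith
    have hC1 : (1 : ℝ) ≤ 9 * (2 * k * (2 * k - 1)) := by nlinarith
    have hM : 9 * (9 * (2 * k * (2 * k - 1))) ^ P.card ≤ D ^ K := by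
      calc 9 * (9 * (2 * (k : ℝ) * (2 * k - 1))) ^ P.card ≤ D * D ^ (K - 1) := by
            refine mul_le_mul (by linarith) ?_ (by positivity) (by linarith)
            exact (pow_le_pow_left₀ (by linarith) hC _).trans
              (pow_le_pow_right₀ (by linarith) hPK)
        _ = D ^ K := by rw [← pow_succ', Nat.sub_add_cancel hK]
    have hCS : (A.card : ℝ) ^ (2 * k) ≤
        (kfoldProd k (A.image fun a => a + 1)).card * shiftEnergy k A := by
      exact_mod_cast card_pow_le_card_kfoldProd_mul_shiftEnergy k A
    have hE' : (shiftEnergy k A : ℝ) ≤ (D ^ K * A.card) ^ k := by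
      refine hE.trans (pow_le_pow_left₀ (by positivity) ?_ _)
      gcongr
    have hfin := hCS.trans (mul_le_mul_of_nonneg_left hE' (Nat.cast_nonneg _))
    rw [two_mul, pow_add, mul_pow, ← mul_assoc] at hfin
    rw [div_pow, div_le_iff₀ (by positivity)]
    exact le_of_mul_le_mul_right hfin (pow_pos hApos k)
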